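/- arXiv:1606.03351 — 2 statements merged into one kernel-verified Lean document; each statement's English description precedes it below -/
import Mathlib

section
/- For any prime p ≥ 5, the sum ∑_{n=0}^{2p-1} binomial(2n, n) is congruent to 3 modulo p if p ≡ 1 (mod 3), and congruent to -3 modulo p if p ≡ 2 (mod 3). -/
/-!
Lucas' theorem gives `centralBinom (m * p + n) ≡ centralBinom m * centralBinom n` modulo `p` for
`n < p`, so the sum up to `2 * p` is `1 + 2 = 3` times the sum up to `p`. For odd `p = 2 * h + 1`,
`h` plays the role of `-1/2` modulo `p`, hence `centralBinom n ≡ (-4) ^ n * h.choose n`, and the sum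
up to `p` becomes the binomial expansion of `(1 - 4) ^ h`. By Euler's criterion this is the
Legendre symbol of `-3`, which quadratic reciprocity turns into that of `p` modulo `3`.
-/

open Finset Nat

theorem centralBinom_mul_add_modEq {p : ℕ} [Fact p.Prime] (m : ℕ) {n : ℕ} (hn : n < p) :
    centralBinom (m * p + n) ≡ centralBinom m * centralBinom n [MOD p] := by
  have hp : 0 < p := n.zero_le.trans_lt hn
  have lucas (k : ℕ) : centralBinom (k * p + n) ≡
      (2 * n % p).choose n * (2 * k + 2 * n / p).choose k [MOD p] := by
    have hbot_mod : (k * p + n) % p = n := by rw [mul_add_mod', mod_eq_of_lt hn]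
    have hbot_div : (k * p + n) / p = k := by
      rw [add_comm, add_mul_div_right _ _ hp, div_eq_of_lt hn, zero_add]
    have htop_mod : 2 * (k * p + n) % p = 2 * n % p := by
      rw [mul_add, ← mul_assoc, mul_add_mod']
    have htop_div : 2 * (k * p + n) / p = 2 * k + 2 * n / p := by
      rw [mul_add, ← mul_assoc, add_comm, add_mul_div_right _ _ hp, add_comm]
    simpa only [centralBinom, hbot_mod, hbot_div, htop_mod, htop_div] using
      Choose.choose_modEq_choose_mod_mul_choose_div_nat (n := 2 * (k * p + n)) (k := k * p + n)
        (p := p)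
  have lucas_zero : centralBinom n ≡ (2 * n % p).choose n [MOD p] := by simpa using lucas 0
  refine (lucas m).trans (.trans ?_ (lucas_zero.mul_left _).symm)
  obtain hlt | hle := lt_or_ge (2 * n) p
  · rw [div_eq_of_lt hlt, add_zero, centralBinom, mul_comm]
  · -- Doubling `n` carries in base `p`, so both sides vanish modulo `p`.
    have hcarry : (2 * n % p).choose n = 0 := choose_eq_zero_of_lt <| by
      rw [mod_eq_sub_mod hle]
      exact (mod_le _ _).trans_lt (by omega)
    rw [hcarry, zero_mul, mul_zero]

theorem sum_range_mul_eq_of_map_mul_add {R : Type*} [NonUnitalNonAssocSemiring R] {f : ℕ → R}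
    {b : ℕ} (hf : ∀ k, ∀ n < b, f (k * b + n) = f k * f n) (m : ℕ) :
    ∑ n ∈ range (m * b), f n = (∑ k ∈ range m, f k) * ∑ n ∈ range b, f n := by
  induction m with
  | zero => simp
  | succ m ih =>
    rw [succ_mul, sum_range_add, ih, sum_range_succ, add_mul, mul_sum _ _ (f m)]
    exact congrArg _ (sum_congr rfl fun n hn => hf m n (mem_range.1 hn))

theorem sum_range_mul_centralBinom {R : Type*} [NonAssocSemiring R] {p : ℕ} [Fact p.Prime]
    [CharP R p] (m : ℕ) :
    ∑ n ∈ range (m * p), (centralBinom n : R) =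
      (∑ k ∈ range m, (centralBinom k : R)) * ∑ n ∈ range p, (centralBinom n : R) :=
  sum_range_mul_eq_of_map_mul_add (fun k n hn => by
    rw [← cast_mul]
    exact CharP.natCast_eq_natCast' R p (centralBinom_mul_add_modEq k hn)) m

theorem cast_succ_mul_choose_succ {R : Type*} [Ring R] (h n : ℕ) :
    ((n : R) + 1) * (h.choose (n + 1) : R) = (h - n) * h.choose n := by
  obtain hn | hn := le_or_gt n h
  · rw [← cast_sub hn]
    have hnat : (n + 1) * h.choose (n + 1) = (h - n) * h.choose n := by
      rw [mul_comm, choose_succ_right_eq, mul_comm]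
    exact_mod_cast congrArg (Nat.cast : ℕ → R) hnat
  · simp [choose_eq_zero_of_lt hn, choose_eq_zero_of_lt (lt_succ_of_lt hn)]

theorem factorial_mul_centralBinom_of_two_mul_add_one_eq_zero {R : Type*} [CommRing R] {h : ℕ}
    (hh : 2 * (h : R) + 1 = 0) (n : ℕ) :
    (n ! : R) * centralBinom n = n ! * ((-4) ^ n * h.choose n) := by
  induction n with
  | zero => simp
  | succ n ih =>
    have hcentral : ((n : R) + 1) * centralBinom (n + 1) = 2 * (2 * n + 1) * centralBinom n := by
      exact_mod_cast congrArg (Nat.cast : ℕ → R) (succ_mul_centralBinom_succ n)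
    have hchoose : ((n : R) + 1) * h.choose (n + 1) = (h - n) * h.choose n :=
      cast_succ_mul_choose_succ h n
    rw [factorial_succ]
    push_cast
    linear_combination (n ! : R) * hcentral + 2 * (2 * (n : R) + 1) * ih
      - n ! * (-4) ^ (n + 1) * hchoose + 2 * n ! * (-4) ^ n * (h.choose n : R) * hh

section CharP

variable {R : Type*} [CommRing R] {p : ℕ} [Fact p.Prime] [CharP R p]

theorem centralBinom_eq_neg_four_pow_mul_choose (hp : p ≠ 2) {n : ℕ} (hn : n < p) :
    (centralBinom n : R) = (-4) ^ n * (p / 2).choose n := by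
  have hhalf : 2 * ((p / 2 : ℕ) : R) + 1 = 0 := by
    have hodd : 2 * (p / 2) + 1 = p :=
      two_mul_div_two_add_one_of_odd ((Fact.out : p.Prime).odd_of_ne_two hp)
    rw [← CharP.cast_eq_zero R p]
    exact_mod_cast congrArg (Nat.cast : ℕ → R) hodd
  exact ((IsUnit.natCast_factorial_iff_of_charP p).2 hn).mul_left_cancel
    (factorial_mul_centralBinom_of_two_mul_add_one_eq_zero hhalf n)

theorem sum_range_centralBinom_mul_pow (hp : p ≠ 2) (x : R) :
    ∑ n ∈ range p, (centralBinom n : R) * x ^ n = (1 - 4 * x) ^ (p / 2) := by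
  have hlt : p / 2 < p := div_lt_self (Fact.out : p.Prime).pos one_lt_two
  calc ∑ n ∈ range p, (centralBinom n : R) * x ^ n
      = ∑ n ∈ range p, (-4 * x) ^ n * (p / 2).choose n := sum_congr rfl fun n hn => by
        rw [centralBinom_eq_neg_four_pow_mul_choose hp (mem_range.1 hn), mul_pow]
        ring
    _ = ∑ n ∈ range (p / 2 + 1), (-4 * x) ^ n * (p / 2).choose n :=
        (sum_subset (range_subset_range.2 hlt) fun n _ hn => by
          rw [choose_eq_zero_of_lt (by simpa using hn), cast_zero, mul_zero]).symm
    _ = (-4 * x + 1) ^ (p / 2) := by simp [add_pow]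
    _ = (1 - 4 * x) ^ (p / 2) := by ring

end CharP

theorem legendreSym_neg_of_three_mod_four {p q : ℕ} [Fact p.Prime] [Fact q.Prime] (hp : p ≠ 2)
    (hq : q % 4 = 3) : legendreSym p (-q) = legendreSym q p := by
  have hq2 : q ≠ 2 := by rintro rfl; contradiction
  rw [neg_eq_neg_one_mul, legendreSym.mul, legendreSym.at_neg_one hp,
    ZMod.χ₄_eq_neg_one_pow ((Fact.out : p.Prime).mod_two_eq_one_iff_ne_two.2 hp),
    legendreSym.quadratic_reciprocity' hp hq2, mul_comm (p / 2), pow_mul,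
    ZMod.neg_one_pow_div_two_of_three_mod_four hq]

theorem sum_range_prime_centralBinom {p : ℕ} [Fact p.Prime] :
    ∑ n ∈ range p, (centralBinom n : ZMod p) = (legendreSym 3 p : ZMod p) := by
  obtain rfl | hp := eq_or_ne p 2
  · decide +revert
  calc ∑ n ∈ range p, (centralBinom n : ZMod p)
      = (1 - 4 * 1) ^ (p / 2) := by simpa using sum_range_centralBinom_mul_pow hp (1 : ZMod p)
    _ = ((-3 : ℤ) : ZMod p) ^ (p / 2) := by norm_num
    _ = (legendreSym p (-3) : ZMod p) := (legendreSym.eq_pow p (-3)).symm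
    _ = (legendreSym 3 p : ZMod p) :=
        congrArg _ (legendreSym_neg_of_three_mod_four (q := 3) hp rfl)

theorem legendreSym_three_of_mod_three_eq_one {n : ℕ} (hn : n % 3 = 1) : legendreSym 3 n = 1 := by
  rw [legendreSym.mod, show (n : ℤ) % (3 : ℕ) = 1 by omega, legendreSym.at_one]

theorem legendreSym_three_of_mod_three_eq_two {n : ℕ} (hn : n % 3 = 2) : legendreSym 3 n = -1 := by
  rw [legendreSym.mod, show (n : ℤ) % (3 : ℕ) = 2 by omega]
  decide

theorem sum_centralBinom_two_p_mod_p_general {p : ℕ} (hp : p.Prime) (m : ℕ) :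
    (p % 3 = 1 → ∑ n ∈ range (m * p), (centralBinom n : ZMod p) =
      ∑ k ∈ range m, (centralBinom k : ZMod p)) ∧
    (p % 3 = 2 → ∑ n ∈ range (m * p), (centralBinom n : ZMod p) =
      -∑ k ∈ range m, (centralBinom k : ZMod p)) := by
  have : Fact p.Prime := ⟨hp⟩
  rw [sum_range_mul_centralBinom, sum_range_prime_centralBinom]
  refine ⟨fun h => ?_, fun h => ?_⟩
  · rw [legendreSym_three_of_mod_three_eq_one h, Int.cast_one, mul_one]
  · rw [legendreSym_three_of_mod_three_eq_two h, Int.cast_neg, Int.cast_one, mul_neg_one]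

theorem sum_centralBinom_two_p_mod_p (p : ℕ) (hp : p.Prime) (hp5 : 5 ≤ p) :
    (p % 3 = 1 → (∑ n ∈ Finset.range (2 * p), (Nat.centralBinom n : ZMod p)) = 3) ∧
    (p % 3 = 2 → (∑ n ∈ Finset.range (2 * p), (Nat.centralBinom n : ZMod p)) = -3) := by
  have hthree : ∑ k ∈ range 2, (centralBinom k : ZMod p) = 3 := by
    norm_num [sum_range_succ, centralBinom]
  simpa only [hthree] using sum_centralBinom_two_p_mod_p_general hp 2
end

section
/- For any prime p ≥ 5, the sum ∑_{n=0}^{p-1} binomial(2n, n) is congruent to 1 modulo p^2 if p ≡ 1 (mod 3), and congruent to -1 modulo p^2 if p ≡ 2 (mod 3). -/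
/-!
The Legendre symbol `χ = (· / 3)` satisfies `χ (x + 1) + χ x + χ (x - 1) = 0`, and its truncation
to positive integers satisfies the same recurrence with a unit source at `0`. Applying Pascal's rule
twice, the truncation turns the partial sums of central binomial coefficients into
`∑ k ≤ n, (2 * n).choose k * χ (n - k)`. When `n = q` is a power of `p`, Vandermonde gives
`(2 * q).choose k ≡ 2 * q.choose k` modulo `p ^ 2` for `0 < k ≤ q`, so the sum is congruent to
`2 * S - χ q` with `S = ∑ k ≤ q, q.choose k * χ (q - k)`. The recurrence evaluates `S` as
`-(-1) ^ q * χ q`, and `2 * (-1) ^ q ≡ -2` modulo `p ^ 2` even for `p = 2`.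
-/

open Finset

section PascalRows

variable {R : Type*} [CommRing R]

lemma sum_range_choose_succ_mul_sub (f : ℤ → R) (m : ℕ) (r : ℤ) :
    ∑ k ∈ range (m + 2), ((m + 1).choose k : R) * f (r - k) =
      ∑ k ∈ range (m + 1), (m.choose k : R) * (f (r - k) + f (r - k - 1)) := by
  simpa only [mul_add, sum_add_distrib, Nat.cast_add_one, sub_add_eq_sub_sub] using
    sum_choose_succ_mul (fun k _ ↦ f (r - k)) m

lemma sum_range_choose_mul_sub_of_recurrence {f : ℤ → R}
    (hf : ∀ x, f (x + 1) + f x + f (x - 1) = 0) (m : ℕ) (r : ℤ) :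
    ∑ k ∈ range (m + 1), (m.choose k : R) * f (r - k) = (-1) ^ m * f (r + m) := by
  induction m generalizing r with
  | zero => simp
  | succ m ih =>
    have hstep (x : ℤ) : f x + f (x - 1) = -f (x + 1) := by linear_combination hf x
    calc ∑ k ∈ range (m + 2), ((m + 1).choose k : R) * f (r - k)
        = -∑ k ∈ range (m + 1), (m.choose k : R) * f (r + 1 - k) := by
          simp only [sum_range_choose_succ_mul_sub, hstep, mul_neg, sum_neg_distrib,
            sub_add_eq_add_sub]
      _ = (-1) ^ (m + 1) * f (r + (m + 1 : ℕ)) := by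
          rw [ih, Nat.cast_add_one, add_assoc, add_comm (1 : ℤ), pow_succ, mul_neg_one, neg_mul]

lemma sum_range_centralBinom_of_recurrence {f : ℤ → R} (hf₀ : f 0 = 0)
    (hf : ∀ x, f (x + 1) + f x + f (x - 1) = if x = 0 then 1 else 0) (n : ℕ) :
    ∑ k ∈ range n, (k.centralBinom : R) =
      ∑ k ∈ range (2 * n + 1), ((2 * n).choose k : R) * f (n - k) := by
  induction n with
  | zero => simp [hf₀]
  | succ n ih =>
    have hstep (k : ℕ) : f ((n + 1 : ℕ) - k) + f ((n + 1 : ℕ) - k - 1) +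
        (f ((n + 1 : ℕ) - k - 1) + f ((n + 1 : ℕ) - k - 1 - 1)) =
          f (n - k) + if n = k then 1 else 0 := by
      have hshift : ((n + 1 : ℕ) : ℤ) - k = n - k + 1 := by push_cast; ring
      have hk := hf (n - k)
      simp only [sub_eq_zero, Nat.cast_inj] at hk
      rw [hshift, add_sub_cancel_right]
      linear_combination hk
    symm
    calc ∑ k ∈ range (2 * n + 3), ((2 * n + 2).choose k : R) * f ((n + 1 : ℕ) - k)
        = ∑ k ∈ range (2 * n + 1),
            ((2 * n).choose k : R) * (f (n - k) + if n = k then 1 else 0) := by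
          rw [sum_range_choose_succ_mul_sub,
            sum_range_choose_succ_mul_sub (fun x ↦ f x + f (x - 1))]
          simp only [hstep]
      _ = ∑ k ∈ range (2 * n + 1), ((2 * n).choose k : R) * f (n - k) + n.centralBinom := by
          simp only [mul_add, sum_add_distrib, mul_ite, mul_one, mul_zero, sum_ite_eq]
          rw [if_pos (mem_range.2 (by lia)), Nat.centralBinom]
      _ = ∑ k ∈ range (n + 1), (k.centralBinom : R) := by rw [← ih, ← sum_range_succ]

end PascalRows

section LegendreSymbolThree

lemma legendreSym_three_two : legendreSym 3 2 = -1 := by decide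

lemma legendreSym_three_recurrence (x : ℤ) :
    legendreSym 3 (x + 1) + legendreSym 3 x + legendreSym 3 (x - 1) = 0 := by
  have h : ∀ y : ZMod 3, quadraticChar (ZMod 3) (y + 1) + quadraticChar (ZMod 3) y +
      quadraticChar (ZMod 3) (y - 1) = 0 := by decide
  simpa only [legendreSym, Int.cast_add, Int.cast_sub, Int.cast_one] using h x

lemma truncated_legendreSym_three_recurrence (x : ℤ) :
    (if 0 < x + 1 then legendreSym 3 (x + 1) else 0) + (if 0 < x then legendreSym 3 x else 0) +
      (if 0 < x - 1 then legendreSym 3 (x - 1) else 0) = if x = 0 then 1 else 0 := by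
  rcases lt_trichotomy x 0 with hneg | rfl | hpos
  · rw [if_neg (by lia), if_neg (by lia), if_neg (by lia), if_neg hneg.ne, add_zero, add_zero]
  · simp
  · have hpred : (if 0 < x - 1 then legendreSym 3 (x - 1) else 0) = legendreSym 3 (x - 1) := by
      obtain rfl | hx : x = 1 ∨ 0 < x - 1 := by lia
      · simp
      · rw [if_pos hx]
    rw [hpred, if_pos (by lia), if_pos hpos, if_neg hpos.ne', legendreSym_three_recurrence]

lemma sum_range_centralBinom_eq_sum_choose_mul_legendreSym_three (n : ℕ) :
    ∑ k ∈ range n, (k.centralBinom : ℤ) =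
      ∑ k ∈ range (n + 1), ((2 * n).choose k : ℤ) * legendreSym 3 (n - k) := by
  rw [sum_range_centralBinom_of_recurrence (f := fun x ↦ if 0 < x then legendreSym 3 x else 0)
    rfl truncated_legendreSym_three_recurrence]
  symm
  refine sum_subset_zero_on_sdiff (range_mono (by lia)) (fun k hk ↦ ?_) (fun k hk ↦ ?_)
  · have hnk : n < k := by simpa only [mem_range_succ_iff, not_le] using (mem_sdiff.1 hk).2
    rw [if_neg (by lia), mul_zero]
  · obtain rfl | hlt : k = n ∨ k < n := (mem_range_succ_iff.1 hk).eq_or_lt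
    · simp
    · rw [if_pos (by lia)]

lemma sum_range_choose_mul_legendreSym_three (n : ℕ) :
    ∑ k ∈ range (n + 1), (n.choose k : ℤ) * legendreSym 3 (n - k) =
      -(-1) ^ n * legendreSym 3 n := by
  rw [sum_range_choose_mul_sub_of_recurrence legendreSym_three_recurrence, ← two_mul,
    legendreSym.mul, legendreSym_three_two]
  ring

end LegendreSymbolThree

section PrimePowers

variable {p : ℕ}

lemma cast_choose_two_mul_prime_pow (hp : p.Prime) (a : ℕ) {k : ℕ} (hk₀ : k ≠ 0)
    (hk : k ≤ p ^ a) :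
    ((2 * p ^ a).choose k : ZMod (p ^ 2)) = 2 * (p ^ a).choose k := by
  have hinner : ∀ ij ∈ HasAntidiagonal.antidiagonal k, ij ≠ (0, k) ∧ ij ≠ (k, 0) →
      ((p ^ a).choose ij.1 * (p ^ a).choose ij.2 : ZMod (p ^ 2)) = 0 := by
    rintro ⟨i, j⟩ hij ⟨hi, hj⟩
    simp only [HasAntidiagonal.mem_antidiagonal, ne_eq, Prod.mk.injEq] at hij hi hj
    rw [← Nat.cast_mul, ZMod.natCast_eq_zero_iff, sq]
    exact mul_dvd_mul (hp.dvd_choose_pow (by lia) (by lia)) (hp.dvd_choose_pow (by lia) (by lia))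
  rw [two_mul, Nat.add_choose_eq]
  push_cast
  rw [sum_eq_add_of_mem (0, k) (k, 0) (by simp) (by simp) (by simp [hk₀.symm]) hinner]
  simp only [Nat.choose_zero_right, Nat.cast_one, one_mul, mul_one, two_mul]

lemma two_mul_neg_one_pow_prime_pow (hp : p.Prime) (a : ℕ) :
    (2 * (-1) ^ p ^ a : ZMod (p ^ 2)) = -2 := by
  obtain rfl | hodd := hp.eq_two_or_odd'
  · have hsign : ∀ u : ZMod 4, u = 1 ∨ u = -1 → 2 * u = -2 := by decide
    exact hsign _ (neg_one_pow_eq_or _ _)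
  · rw [hodd.pow.neg_one_pow, mul_neg_one]

theorem sum_centralBinom_mod_p_sq_general (hp : p.Prime) (a : ℕ) :
    ∑ n ∈ range (p ^ a), (n.centralBinom : ZMod (p ^ 2)) = legendreSym 3 (p ^ a : ℕ) := by
  set q := p ^ a
  set χ : ℤ → ZMod (p ^ 2) := fun x ↦ legendreSym 3 x
  have hpartial : ∑ n ∈ range q, (n.centralBinom : ZMod (p ^ 2)) =
      ∑ k ∈ range (q + 1), ((2 * q).choose k : ZMod (p ^ 2)) * χ (q - k) := by
    simpa using congrArg (Int.cast : ℤ → ZMod (p ^ 2))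
      (sum_range_centralBinom_eq_sum_choose_mul_legendreSym_three q)
  have hrow : ∑ k ∈ range (q + 1), (q.choose k : ZMod (p ^ 2)) * χ (q - k) =
      -(-1) ^ q * χ q := by
    simpa using congrArg (Int.cast : ℤ → ZMod (p ^ 2))
      (sum_range_choose_mul_legendreSym_three q)
  have hdouble : ∑ k ∈ range q, ((2 * q).choose (k + 1) : ZMod (p ^ 2)) * χ (q - (k + 1 : ℕ)) =
      2 * ∑ k ∈ range q, (q.choose (k + 1) : ZMod (p ^ 2)) * χ (q - (k + 1 : ℕ)) := by
    rw [mul_sum]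
    refine sum_congr rfl fun k hk ↦ ?_
    rw [cast_choose_two_mul_prime_pow hp a k.succ_ne_zero (mem_range.1 hk), mul_assoc]
  rw [sum_range_succ'] at hpartial hrow
  simp only [Nat.choose_zero_right, Nat.cast_one, Nat.cast_zero, one_mul, sub_zero]
    at hpartial hrow
  linear_combination hpartial + hdouble + 2 * hrow - χ q * two_mul_neg_one_pow_prime_pow hp a

end PrimePowers

theorem sum_centralBinom_mod_p_sq (p : ℕ) (hp : p.Prime) (hp5 : 5 ≤ p) :
    (p % 3 = 1 → (∑ n ∈ Finset.range p, (Nat.centralBinom n : ZMod (p ^ 2))) = 1) ∧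
    (p % 3 = 2 → (∑ n ∈ Finset.range p, (Nat.centralBinom n : ZMod (p ^ 2))) = -1) := by
  have h := sum_centralBinom_mod_p_sq_general hp 1
  rw [pow_one, legendreSym.mod] at h
  constructor <;> intro hmod
  · rw [h, show (p : ℤ) % (3 : ℕ) = 1 by lia, legendreSym.at_one, Int.cast_one]
  · rw [h, show (p : ℤ) % (3 : ℕ) = 2 by lia, legendreSym_three_two, Int.cast_neg, Int.cast_one]
end
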